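/- Fix n ≥ 1 and initial data x_1(0) < x_2(0) < ⋯ < x_n(0) in ℝ. Then there exist functions x_1, …, x_n : [0, ∞) → ℝ, differentiable, with x_1(t) < ⋯ < x_n(t) for all t ≥ 0, satisfying the prescribed initial values and the system of ordinary differential equations x_i'(t) = ∑_{k≠i} 2/(x_i(t) − x_k(t)) − x_i(t) for all t > 0 and 1 ≤ i ≤ n. Moreover, if z_1 < z_2 < ⋯ < z_n are the n zeros of the probabilist's Hermite polynomial He_n, then there is a constant c > 0 (depending on the initial data and n) such that max_{1 ≤ i ≤ n} |x_i(t) − z_i| ≤ c·e^{−t} for all t ≥ 0. -/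

import Mathlib

open Polynomial Finset

/-- Regularised reciprocal. -/
noncomputable def hh (δ u : ℝ) : ℝ := (max u δ)⁻¹

/-- Antiderivative of the regularised reciprocal. -/
noncomputable def HH (δ u : ℝ) : ℝ := Real.log (max u δ) + min (u - δ) 0 / δ

/-- Regularised interaction. -/
noncomputable def SS {n : ℕ} (δ : ℝ) (x : Fin n → ℝ) (i : Fin n) : ℝ :=
  ∑ k, ((if k < i then hh δ (x i - x k) else 0) - (if i < k then hh δ (x k - x i) else 0))

lemma hh_antitone {δ : ℝ} (hδ : 0 < δ) : Antitone (hh δ) := by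
  intro u v huv
  unfold hh
  have : 0 < max u δ := lt_max_of_lt_right hδ
  gcongr

lemma hh_abs_le {δ : ℝ} (hδ : 0 < δ) (u : ℝ) : |hh δ u| ≤ δ⁻¹ := by
  unfold hh
  have : 0 < max u δ := lt_max_of_lt_right hδ
  rw [abs_of_pos (by positivity)]
  gcongr
  exact le_max_right _ _

lemma hh_lip {δ : ℝ} (hδ : 0 < δ) (u v : ℝ) : |hh δ u - hh δ v| ≤ (δ⁻¹) ^ 2 * |u - v| := by
  unfold hh
  have h1 : 0 < max u δ := lt_max_of_lt_right hδ
  have h2 : 0 < max v δ := lt_max_of_lt_right hδ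
  have h3 : |max v δ - max u δ| ≤ |u - v| := by
    rw [abs_sub_comm u v]
    exact abs_max_sub_max_le_abs v u δ
  have h4 : (max u δ)⁻¹ - (max v δ)⁻¹ = (max u δ)⁻¹ * (max v δ)⁻¹ * (max v δ - max u δ) := by
    field_simp
  rw [h4, abs_mul, abs_of_pos (by positivity)]
  have h5 : (max u δ)⁻¹ ≤ δ⁻¹ := by gcongr; exact le_max_right _ _
  have h6 : (max v δ)⁻¹ ≤ δ⁻¹ := by gcongr; exact le_max_right _ _
  rw [pow_two]
  gcongr

lemma HH_deriv {δ : ℝ} (hδ : 0 < δ) (u : ℝ) : HasDerivAt (HH δ) (hh δ u) u := by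
  have hA : ∀ u, 0 < u → HasDerivAt Real.log u⁻¹ u := fun u hu => Real.hasDerivAt_log hu.ne'
  have hB : ∀ u, HasDerivAt (fun u => Real.log δ + (u - δ) / δ) δ⁻¹ u := by
    intro u
    have := (((hasDerivAt_id u).sub_const δ).div_const δ).const_add (Real.log δ)
    simpa using this
  have e1 : ∀ v, δ ≤ v → HH δ v = Real.log v := by
    intro v hv
    simp [HH, max_eq_left hv, min_eq_right (sub_nonneg.2 hv)]
  have e2 : ∀ v, v ≤ δ → HH δ v = Real.log δ + (v - δ) / δ := by
    intro v hv
    simp [HH, max_eq_right hv, min_eq_left (sub_nonpos.2 hv)]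
  rcases lt_trichotomy u δ with h | h | h
  · have : hh δ u = δ⁻¹ := by simp [hh, max_eq_right h.le]
    rw [this]
    refine (hB u).congr_of_eventuallyEq ?_
    filter_upwards [Iio_mem_nhds h] with v hv using e2 v (le_of_lt hv)
  · subst h
    have : hh u u = u⁻¹ := by simp [hh]
    rw [this]
    have r1 : HasDerivWithinAt (HH u) u⁻¹ (Set.Iic u) u :=
      (hB u).hasDerivWithinAt.congr (fun v hv => e2 v hv) (e2 u le_rfl)
    have r2 : HasDerivWithinAt (HH u) u⁻¹ (Set.Ici u) u :=
      (hA u hδ).hasDerivWithinAt.congr (fun v hv => e1 v hv) (e1 u le_rfl)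
    have := r1.union r2
    rwa [Set.Iic_union_Ici, hasDerivWithinAt_univ] at this
  · have : hh δ u = u⁻¹ := by simp [hh, max_eq_left h.le]
    rw [this]
    refine (hA u (hδ.trans h)).congr_of_eventuallyEq ?_
    filter_upwards [Ioi_mem_nhds h] with v hv using e1 v (le_of_lt hv)

lemma HH_eq {δ v : ℝ} (hv : δ ≤ v) : HH δ v = Real.log v := by
  simp [HH, max_eq_left hv, min_eq_right (sub_nonneg.2 hv)]

lemma HH_le {δ u B : ℝ} (hδ : 0 < δ) (hδ1 : δ ≤ 1) (hB : 1 ≤ B) (hu : u ≤ B) : HH δ u ≤ B := by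
  have h1 : 0 < max u δ := lt_max_of_lt_right hδ
  have h2 : Real.log (max u δ) ≤ max u δ - 1 := Real.log_le_sub_one_of_pos h1
  have h3 : max u δ ≤ B := max_le hu (hδ1.trans hB)
  have h4 : min (u - δ) 0 / δ ≤ 0 := div_nonpos_of_nonpos_of_nonneg (min_le_right _ _) hδ.le
  unfold HH
  linarith

lemma lt_of_HH {δ u : ℝ} (hδ : 0 < δ) (h : Real.log δ < HH δ u) : δ < u := by
  by_contra! hc
  have h4 : min (u - δ) 0 / δ ≤ 0 := div_nonpos_of_nonpos_of_nonneg (min_le_right _ _) hδ.le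
  simp only [HH, max_eq_right hc] at h
  linarith

lemma SS_symm {n : ℕ} (δ : ℝ) (x a : Fin n → ℝ) :
    ∑ i, a i * SS δ x i = ∑ i, ∑ k, if k < i then hh δ (x i - x k) * (a i - a k) else 0 := by
  have h1 : ∑ i, a i * SS δ x i = (∑ i, ∑ k, if k < i then hh δ (x i - x k) * a i else 0)
      - ∑ i, ∑ k, if i < k then hh δ (x k - x i) * a i else 0 := by
    rw [← Finset.sum_sub_distrib]
    refine Finset.sum_congr rfl fun i _ => ?_
    rw [← Finset.sum_sub_distrib, SS, Finset.mul_sum]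
    refine Finset.sum_congr rfl fun k _ => ?_
    split_ifs <;> ring
  rw [h1, Finset.sum_comm (f := fun i k => if i < k then hh δ (x k - x i) * a i else 0),
    ← Finset.sum_sub_distrib]
  refine Finset.sum_congr rfl fun i _ => ?_
  rw [← Finset.sum_sub_distrib]
  refine Finset.sum_congr rfl fun k _ => ?_
  split_ifs <;> ring

lemma SS_mono {n : ℕ} {δ : ℝ} (hδ : 0 < δ) (x y : Fin n → ℝ) :
    ∑ i, (x i - y i) * (SS δ x i - SS δ y i) ≤ 0 := by
  have h1 := SS_symm δ x (fun i => x i - y i)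
  have h2 := SS_symm δ y (fun i => x i - y i)
  simp only [mul_sub (_ : ℝ) (SS δ x _), Finset.sum_sub_distrib]
  rw [h1, h2, ← Finset.sum_sub_distrib]
  refine Finset.sum_nonpos fun i _ => ?_
  rw [← Finset.sum_sub_distrib]
  refine Finset.sum_nonpos fun k _ => ?_
  split_ifs
  · rcases le_total (x i - x k) (y i - y k) with h | h
    · have := hh_antitone hδ h
      nlinarith
    · have := hh_antitone hδ h
      nlinarith
  · simp

lemma SS_abs_le {n : ℕ} {δ : ℝ} (hδ : 0 < δ) (x : Fin n → ℝ) (i : Fin n) :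
    |SS δ x i| ≤ n * δ⁻¹ := by
  unfold SS
  refine (Finset.abs_sum_le_sum_abs _ _).trans ?_
  have : ∑ k : Fin n, δ⁻¹ = n * δ⁻¹ := by simp
  rw [← this]
  refine Finset.sum_le_sum fun k _ => ?_
  have hp : 0 < δ⁻¹ := by positivity
  split_ifs with h1 h2 h2
  · exact absurd h1 (lt_asymm h2)
  · simpa using hh_abs_le hδ _
  · simpa using hh_abs_le hδ _
  · simpa using hp.le

lemma SS_lip {n : ℕ} {δ : ℝ} (hδ : 0 < δ) (x y : Fin n → ℝ) (i : Fin n) :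
    |SS δ x i - SS δ y i| ≤ n * ((δ⁻¹) ^ 2 * (2 * ‖x - y‖)) := by
  unfold SS
  rw [← Finset.sum_sub_distrib]
  refine (Finset.abs_sum_le_sum_abs _ _).trans ?_
  have : ∑ k : Fin n, ((δ⁻¹) ^ 2 * (2 * ‖x - y‖)) = n * ((δ⁻¹) ^ 2 * (2 * ‖x - y‖)) := by simp
  rw [← this]
  refine Finset.sum_le_sum fun k _ => ?_
  have hn : ∀ i, |x i - y i| ≤ ‖x - y‖ := fun i => norm_le_pi_norm (x - y) i
  have key : ∀ i k, |hh δ (x i - x k) - hh δ (y i - y k)| ≤ (δ⁻¹) ^ 2 * (2 * ‖x - y‖) := by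
    intro i k
    refine (hh_lip hδ _ _).trans ?_
    gcongr
    have : x i - x k - (y i - y k) = (x i - y i) - (x k - y k) := by ring
    rw [this]
    have := abs_sub (x i - y i) (x k - y k)
    linarith [hn i, hn k]
  split_ifs with h1 h2 h2
  · exact absurd h1 (lt_asymm h2)
  · simpa using key i k
  · have := key k i
    rw [abs_sub_comm] at this
    simpa [sub_eq_add_neg, add_comm] using this
  · simp only [sub_self, abs_zero]; positivity

lemma SS_eq {n : ℕ} {δ : ℝ} (hδ : 0 < δ) (x : Fin n → ℝ) (hx : ∀ i k, k < i → δ ≤ x i - x k)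
    (i : Fin n) : 2 * SS δ x i = ∑ k ∈ univ.erase i, 2 / (x i - x k) := by
  unfold SS
  rw [← Finset.add_sum_erase univ _ (Finset.mem_univ i), _root_.mul_add, Finset.mul_sum]
  simp only [lt_irrefl, if_false, sub_self, mul_zero, zero_add]
  refine Finset.sum_congr rfl fun k hk => ?_
  have hk' : k ≠ i := (Finset.mem_erase.1 hk).1
  rcases lt_or_gt_of_ne hk' with h | h
  · have := hx i k h
    simp [h, not_lt_of_gt h, hh, max_eq_left this, div_eq_mul_inv]
  · have := hx k i h
    simp only [h, not_lt_of_gt h, hh, max_eq_left this, div_eq_mul_inv, if_true, if_false]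
    rw [← neg_sub (x k) (x i), inv_neg]
    ring

lemma hh_cont {δ : ℝ} (hδ : 0 < δ) : Continuous (hh δ) := by
  unfold hh
  exact (continuous_id.max continuous_const).inv₀ (fun u => (lt_max_of_lt_right hδ).ne')

lemma SS_cont {n : ℕ} {δ : ℝ} (hδ : 0 < δ) (i : Fin n) :
    Continuous (fun x : Fin n → ℝ => SS δ x i) := by
  unfold SS
  refine continuous_finsetSum _ fun k _ => ?_
  have h := hh_cont hδ
  split_ifs <;> fun_prop

/-- Solutions of the regularised flow on `[0, T]`. -/
def IsSol {n : ℕ} (δ T : ℝ) (f : ℝ → Fin n → ℝ) : Prop :=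
  ∀ t ∈ Set.Icc 0 T, ∀ i,
    HasDerivWithinAt (fun s => f s i) (2 * SS δ (f t) i - f t i) (Set.Icc 0 T) t

lemma IsSol.mono {n : ℕ} {δ T T' : ℝ} {f : ℝ → Fin n → ℝ} (h : IsSol δ T f) (hT : T' ≤ T) :
    IsSol δ T' f := fun t ht i =>
  (h t ⟨ht.1, ht.2.trans hT⟩ i).mono (Set.Icc_subset_Icc_right hT)

lemma exists_sol {n : ℕ} {δ : ℝ} (hδ : 0 < δ) {T : ℝ} (hT : 0 ≤ T) (x0 : Fin n → ℝ) :
    ∃ f : ℝ → Fin n → ℝ, f 0 = x0 ∧ IsSol δ T f := by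
  let F : ℝ → (Fin n → ℝ) → (Fin n → ℝ) := fun t y i =>
    Real.exp t * (2 * SS δ (fun k => Real.exp (-t) * y k) i)
  let L : NNReal := ⟨Real.exp T * (2 * (n * δ⁻¹)), by positivity⟩
  let K : NNReal := ⟨Real.exp T * (2 * (n * ((δ⁻¹) ^ 2 * 2))), by positivity⟩
  let TT : NNReal := ⟨T, hT⟩
  have hP : IsPicardLindelof F (⟨0, le_rfl, hT⟩ : Set.Icc 0 T) x0 (L * TT) 0 L K := by
    refine ⟨?_, ?_, ?_, ?_⟩
    · intro t ht
      refine LipschitzOnWith.of_dist_le_mul fun x _ y _ => ?_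
      rw [dist_pi_le_iff (by positivity)]
      intro i
      rw [Real.dist_eq, dist_eq_norm]
      have h1 := SS_lip hδ (fun k => Real.exp (-t) * x k) (fun k => Real.exp (-t) * y k) i
      have h2 : (fun k => Real.exp (-t) * x k) - (fun k => Real.exp (-t) * y k)
          = Real.exp (-t) • (x - y) := by
        ext k; simp [mul_sub]
      have h3 : ‖Real.exp (-t) • (x - y)‖ ≤ ‖x - y‖ := by
        rw [norm_smul, Real.norm_eq_abs, Real.abs_exp]
        have : Real.exp (-t) ≤ 1 := Real.exp_le_one_iff.2 (by linarith [ht.1])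
        exact mul_le_of_le_one_left (norm_nonneg _) this
      rw [h2] at h1
      have h4 : Real.exp t ≤ Real.exp T := Real.exp_le_exp.2 ht.2
      show |Real.exp t * (2 * SS δ (fun k => Real.exp (-t) * x k) i)
        - Real.exp t * (2 * SS δ (fun k => Real.exp (-t) * y k) i)|
        ≤ Real.exp T * (2 * (n * ((δ⁻¹) ^ 2 * 2))) * ‖x - y‖
      rw [← mul_sub, ← mul_sub, abs_mul, abs_mul, Real.abs_exp, abs_two]
      calc _ ≤ Real.exp T * (2 * (n * ((δ⁻¹) ^ 2 * (2 * ‖x - y‖)))) := by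
            gcongr
            refine h1.trans ?_
            gcongr
        _ = _ := by ring
    · intro x _
      refine Continuous.continuousOn ?_
      refine continuous_pi fun i => ?_
      have := SS_cont hδ i
      have h5 : Continuous (fun t : ℝ => SS δ (fun k => Real.exp (-t) * x k) i) :=
        this.comp (f := fun t : ℝ => (fun k => Real.exp (-t) * x k)) (by fun_prop)
      show Continuous (fun t => Real.exp t * (2 * SS δ (fun k => Real.exp (-t) * x k) i))
      fun_prop
    · intro t ht x _
      rw [pi_norm_le_iff_of_nonneg (by positivity)]
      intro i
      show |Real.exp t * (2 * SS δ (fun k => Real.exp (-t) * x k) i)|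
        ≤ Real.exp T * (2 * (n * δ⁻¹))
      rw [abs_mul, abs_mul, Real.abs_exp, abs_two]
      have h4 : Real.exp t ≤ Real.exp T := Real.exp_le_exp.2 ht.2
      gcongr
      exact SS_abs_le hδ _ i
    · have : max (T - 0) (0 - 0 : ℝ) = T := by simp [hT]
      show (L : ℝ) * max (T - 0) (0 - 0) ≤ (L * TT : NNReal) - (0 : NNReal)
      rw [this]
      rw [NNReal.coe_mul]
      simp only [NNReal.coe_zero, sub_zero]
      exact le_rfl
  obtain ⟨y, hy0, hy⟩ := hP.exists_eq_forall_mem_Icc_hasDerivWithinAt₀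
  refine ⟨fun t i => Real.exp (-t) * y t i, ?_, ?_⟩
  · ext i
    have : y 0 = x0 := hy0
    simp [this]
  · intro t ht i
    have h1 := (hasDerivWithinAt_pi.1 (hy t ht)) i
    have h2 : HasDerivWithinAt (fun s : ℝ => Real.exp (-s)) (-Real.exp (-t)) (Set.Icc 0 T) t := by
      have := ((hasDerivAt_neg t).exp).hasDerivWithinAt (s := Set.Icc 0 T)
      simpa using this
    have h3 := h2.mul h1
    refine h3.congr_deriv ?_
    have h4 : Real.exp (-t) * Real.exp t = 1 := by rw [← Real.exp_add]; simp
    simp only [F]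
    rw [← mul_assoc (Real.exp (-t)), h4]
    ring

lemma IsSol.contract {n : ℕ} {δ T : ℝ} (hδ : 0 < δ) {f g : ℝ → Fin n → ℝ}
    (hf : IsSol δ T f) (hg : IsSol δ T g) {t : ℝ} (ht : t ∈ Set.Icc 0 T) :
    ∑ i, (f t i - g t i) ^ 2 ≤ Real.exp (-(2 * t)) * ∑ i, (f 0 i - g 0 i) ^ 2 := by
  let N : ℝ → ℝ := fun t => Real.exp (2 * t) * ∑ i, (f t i - g t i) ^ 2
  have hd : ∀ t ∈ Set.Icc 0 T, HasDerivWithinAt N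
      (Real.exp (2 * t) * (4 * ∑ i, (f t i - g t i) * (SS δ (f t) i - SS δ (g t) i)))
      (Set.Icc 0 T) t := by
    intro t ht
    have h1 : HasDerivWithinAt (fun s : ℝ => Real.exp (2 * s)) (Real.exp (2 * t) * 2)
        (Set.Icc 0 T) t := by
      have := (((hasDerivAt_id t).const_mul 2).exp).hasDerivWithinAt (s := Set.Icc 0 T)
      simpa using this
    have h2 := HasDerivWithinAt.fun_sum (u := univ) (fun i _ =>
      (((hf t ht i).sub (hg t ht i)).pow 2))
    have h3 := h1.mul h2
    refine h3.congr_deriv ?_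
    rw [mul_assoc, ← mul_add]
    congr 1
    simp only [Pi.sub_apply, Pi.pow_apply]
    rw [Finset.mul_sum, Finset.mul_sum, ← Finset.sum_add_distrib]
    refine Finset.sum_congr rfl fun i _ => ?_
    simp
    ring
  have hanti : AntitoneOn N (Set.Icc 0 T) := by
    refine antitoneOn_of_hasDerivWithinAt_nonpos (convex_Icc 0 T)
      (fun t ht => (hd t ht).continuousWithinAt)
      (fun t ht => (hd t (interior_subset ht)).mono interior_subset) ?_
    intro t ht
    have := SS_mono hδ (f t) (g t)
    have h5 := Real.exp_pos (2 * t)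
    nlinarith
  have h6 := hanti ⟨le_rfl, ht.1.trans ht.2⟩ ht ht.1
  simp only [N, mul_zero, Real.exp_zero, one_mul] at h6
  have h7 : Real.exp (-(2 * t)) * Real.exp (2 * t) = 1 := by rw [← Real.exp_add]; simp
  calc _ = Real.exp (-(2 * t)) * (Real.exp (2 * t) * ∑ i, (f t i - g t i) ^ 2) := by
        rw [← mul_assoc, h7, one_mul]
    _ ≤ _ := by gcongr

/-- Regularised logarithmic energy. -/
noncomputable def GG {n : ℕ} (δ : ℝ) (x : Fin n → ℝ) : ℝ :=
  ∑ i, ∑ k, if k < i then HH δ (x i - x k) else 0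

lemma IsSol.energy {n : ℕ} {δ T : ℝ} (hδ : 0 < δ) {f : ℝ → Fin n → ℝ}
    (hf : IsSol δ T f) {t : ℝ} (ht : t ∈ Set.Icc 0 T) :
    GG δ (f 0) - (∑ i, f 0 i ^ 2) / 4 ≤ GG δ (f t) := by
  let N : ℝ → ℝ := fun t => 4 * GG δ (f t) - ∑ i, f t i ^ 2
  have hd : ∀ t ∈ Set.Icc 0 T, HasDerivWithinAt N
      (2 * ∑ i, (2 * SS δ (f t) i - f t i) ^ 2) (Set.Icc 0 T) t := by
    intro t ht
    have h2 := HasDerivWithinAt.fun_sum (u := univ) (fun i _ => ((hf t ht i).fun_pow 2))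
    have h1 : HasDerivWithinAt (fun s => GG δ (f s)) (∑ i, ∑ k, if k < i then
        hh δ (f t i - f t k) * ((2 * SS δ (f t) i - f t i) - (2 * SS δ (f t) k - f t k)) else 0)
        (Set.Icc 0 T) t := by
      unfold GG
      refine HasDerivWithinAt.fun_sum fun i _ => HasDerivWithinAt.fun_sum fun k _ => ?_
      split_ifs
      · exact (HH_deriv hδ _).comp_hasDerivWithinAt t ((hf t ht i).fun_sub (hf t ht k))
      · exact hasDerivWithinAt_const _ _ _
    rw [← SS_symm δ (f t) (fun i => 2 * SS δ (f t) i - f t i)] at h1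
    have h3 := (h1.const_mul 4).fun_sub h2
    refine h3.congr_deriv ?_
    rw [Finset.mul_sum, Finset.mul_sum, ← Finset.sum_sub_distrib]
    refine Finset.sum_congr rfl fun i _ => ?_
    simp
    ring
  have hmono : MonotoneOn N (Set.Icc 0 T) := by
    refine monotoneOn_of_hasDerivWithinAt_nonneg (convex_Icc 0 T)
      (fun t ht => (hd t ht).continuousWithinAt)
      (fun t ht => (hd t (interior_subset ht)).mono interior_subset) ?_
    intro t ht
    positivity
  have h6 := hmono ⟨le_rfl, ht.1.trans ht.2⟩ ht ht.1
  simp only [N] at h6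
  have : 0 ≤ ∑ i, f t i ^ 2 := by positivity
  linarith

lemma derivative_hermite_succ' (n : ℕ) :
    derivative (hermite (n + 1)) = ((n : ℤ[X]) + 1) * hermite n := by
  induction n with
  | zero => simp [hermite_one]
  | succ n ih =>
    have h1 : hermite (n + 1) = X * hermite n - derivative (hermite n) := hermite_succ n
    rw [hermite_succ (n + 1)]
    simp only [derivative_sub, derivative_mul, derivative_X, ih, derivative_add,
      derivative_natCast, derivative_one]
    rw [h1]
    push_cast
    ring

lemma hermite_equil {n : ℕ} (z : Fin n → ℝ) (hz : StrictMono z)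
    (hzroots : (Polynomial.hermite n).map (Int.castRingHom ℝ) = ∏ k, (X - C (z k))) (i : Fin n) :
    ∑ k ∈ univ.erase i, 2 / (z i - z k) = z i := by
  obtain _ | m := n
  · exact i.elim0
  have hode : derivative (derivative (hermite (m + 1))) = X * derivative (hermite (m + 1))
      - ((m : ℤ[X]) + 1) * hermite (m + 1) := by
    rw [derivative_hermite_succ', derivative_mul, hermite_succ m]
    simp only [derivative_add, derivative_natCast, derivative_one]
    ring
  have hode' := congrArg (Polynomial.map (Int.castRingHom ℝ)) hode
  simp only [Polynomial.map_sub, Polynomial.map_mul, Polynomial.map_add, map_X, Polynomial.map_natCast,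
    Polynomial.map_one, ← Polynomial.derivative_map] at hode'
  rw [hzroots, ← Finset.mul_prod_erase univ _ (Finset.mem_univ i)] at hode'
  set q : ℝ[X] := ∏ k ∈ univ.erase i, (X - C (z k)) with hq
  have h1 := congrArg (Polynomial.eval (z i)) hode'
  simp only [derivative_mul, derivative_add, derivative_sub, derivative_X, derivative_C, eval_add, eval_mul,
    eval_sub, eval_X, eval_C, sub_self, zero_mul, sub_zero, one_mul, add_zero, eval_one, mul_zero,
    derivative_one, derivative_zero, eval_zero, zero_add] at h1
  have hne : ∀ k ∈ univ.erase i, z i - z k ≠ 0 := fun k hk =>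
    sub_ne_zero.2 (hz.injective.ne (Finset.mem_erase.1 hk).1.symm)
  have h2 : eval (z i) q = ∏ k ∈ univ.erase i, (z i - z k) := by
    simp [hq, eval_prod]
  have h2' : eval (z i) q ≠ 0 := by rw [h2]; exact Finset.prod_ne_zero_iff.2 hne
  have h3 : eval (z i) (derivative q) = eval (z i) q * ∑ k ∈ univ.erase i, 1 / (z i - z k) := by
    rw [hq, derivative_prod_finset, eval_finsetSum, Finset.mul_sum, ← hq, h2]
    refine Finset.sum_congr rfl fun k hk => ?_
    rw [← Finset.mul_prod_erase _ _ hk]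
    simp only [derivative_X_sub_C, mul_one, eval_prod, eval_sub, eval_X, eval_C]
    have := hne k hk
    field_simp
  rw [h3] at h1
  have h4 : ∑ k ∈ univ.erase i, 2 / (z i - z k) = 2 * ∑ k ∈ univ.erase i, 1 / (z i - z k) := by
    rw [Finset.mul_sum]
    exact Finset.sum_congr rfl fun k _ => by ring
  rw [h4]
  apply mul_left_cancel₀ h2'
  linarith

lemma exists_lower {ι : Type*} (s : Finset ι) (g : ι → ℝ) (hg : ∀ i ∈ s, 0 < g i) :
    ∃ d : ℝ, 0 < d ∧ ∀ i ∈ s, d ≤ g i := by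
  classical
  induction s using Finset.induction_on with
  | empty => exact ⟨1, one_pos, by simp⟩
  | insert a s ha ih =>
    obtain ⟨d, hd, h⟩ := ih fun i hi => hg i (Finset.mem_insert_of_mem hi)
    refine ⟨min d (g a), lt_min hd (hg a (Finset.mem_insert_self _ _)), fun i hi => ?_⟩
    rcases Finset.mem_insert.1 hi with rfl | hi
    · exact min_le_right _ _
    · exact (min_le_left _ _).trans (h i hi)

lemma exists_gap {n : ℕ} (x : Fin n → ℝ) (hx : StrictMono x) :
    ∃ d : ℝ, 0 < d ∧ ∀ i k, k < i → d ≤ x i - x k := by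
  obtain ⟨d, hd, h⟩ := exists_lower (univ.filter fun p : Fin n × Fin n => p.2 < p.1)
    (fun p => x p.1 - x p.2) (fun p hp => sub_pos.2 (hx (Finset.mem_filter.1 hp).2))
  exact ⟨d, hd, fun i k hik => h (i, k) (by simpa using hik)⟩

theorem stmt_18 (n : ℕ) (hn : 1 ≤ n)
    (x0 : Fin n → ℝ) (hx0 : StrictMono x0)
    (z : Fin n → ℝ) (hz : StrictMono z)
    (hzroots : (Polynomial.hermite n).map (Int.castRingHom ℝ)
        = ∏ k, (X - C (z k))) :
    ∃ f : Fin n → ℝ → ℝ,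
      (∀ i, f i 0 = x0 i) ∧
      (∀ i, DifferentiableOn ℝ (f i) (Set.Ici (0 : ℝ))) ∧
      (∀ t ∈ Set.Ici (0 : ℝ), StrictMono (fun i => f i t)) ∧
      (∀ i : Fin n, ∀ t : ℝ, 0 < t →
        HasDerivAt (f i)
          ((∑ k ∈ univ.erase i, 2 / (f i t - f k t)) - f i t) t) ∧
      ∃ c : ℝ, 0 < c ∧ ∀ t ∈ Set.Ici (0 : ℝ), ∀ i : Fin n,
        |f i t - z i| ≤ c * Real.exp (-t) := by
  obtain ⟨d1, hd1, hgx⟩ := exists_gap x0 hx0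
  obtain ⟨d2, hd2, hgz⟩ := exists_gap z hz
  set s0 : ℝ := √(∑ i, (x0 i - z i) ^ 2) with hs0
  have hs0n : 0 ≤ s0 := Real.sqrt_nonneg _
  set B : ℝ := 1 + 2 * s0 + 2 * ‖z‖ with hB
  have hB1 : 1 ≤ B := by have := norm_nonneg z; linarith
  set M : ℝ := (∑ i, ∑ k, if k < i then Real.log (x0 i - x0 k) else 0)
    - (∑ i, x0 i ^ 2) / 4 - n * (n * B) with hM
  set δ : ℝ := min (min d1 d2) (min 1 (Real.exp (M - 1))) with hδd
  have hδ : 0 < δ := lt_min (lt_min hd1 hd2) (lt_min one_pos (Real.exp_pos _))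
  have hδ1 : δ ≤ d1 := (min_le_left _ _).trans (min_le_left _ _)
  have hδ2 : δ ≤ d2 := (min_le_left _ _).trans (min_le_right _ _)
  have hδ3 : δ ≤ 1 := (min_le_right _ _).trans (min_le_left _ _)
  have hδ4 : δ ≤ Real.exp (M - 1) := (min_le_right _ _).trans (min_le_right _ _)
  have hlogδ : Real.log δ < M := by
    have := Real.log_le_log hδ hδ4
    rw [Real.log_exp] at this
    linarith
  have hzsol : ∀ T, IsSol δ T (fun _ => z) := by
    intro T t _ i
    rw [SS_eq hδ z (fun i k h => hδ2.trans (hgz i k h)), hermite_equil z hz hzroots, sub_self]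
    exact hasDerivWithinAt_const _ _ _
  -- decay
  have hdecay : ∀ (T : ℝ) (f : ℝ → Fin n → ℝ), f 0 = x0 → IsSol δ T f → ∀ t ∈ Set.Icc 0 T, ∀ i,
      |f t i - z i| ≤ s0 * Real.exp (-t) := by
    intro T f hf0 hf t ht i
    have h1 := hf.contract hδ (hzsol T) ht
    rw [hf0] at h1
    have h2 : (f t i - z i) ^ 2 ≤ ∑ i, (f t i - z i) ^ 2 :=
      Finset.single_le_sum (f := fun i => (f t i - z i) ^ 2) (fun i _ => sq_nonneg _)
        (Finset.mem_univ i)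
    refine abs_le_of_sq_le_sq ?_ (by positivity)
    have h3 : s0 ^ 2 = ∑ i, (x0 i - z i) ^ 2 := Real.sq_sqrt (by positivity)
    have h4 : Real.exp (-t) ^ 2 = Real.exp (-(2 * t)) := by
      rw [← Real.exp_nat_mul]; congr 1; push_cast; ring
    rw [mul_pow, h3, h4]
    linarith
  -- gaps stay open
  have hgap : ∀ (T : ℝ) (f : ℝ → Fin n → ℝ), f 0 = x0 → IsSol δ T f → ∀ t ∈ Set.Icc 0 T,
      ∀ i k, k < i → δ < f t i - f t k := by
    intro T f hf0 hf t ht i k hik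
    have h1 := hf.energy hδ ht
    have h2 : GG δ (f 0) = ∑ i, ∑ k, if k < i then Real.log (x0 i - x0 k) else 0 := by
      rw [hf0]
      unfold GG
      refine Finset.sum_congr rfl fun i _ => Finset.sum_congr rfl fun k _ => ?_
      split_ifs with h
      · exact HH_eq (hδ1.trans (hgx i k h))
      · rfl
    have hub : ∀ i k, HH δ (f t i - f t k) ≤ B := by
      intro i k
      refine HH_le hδ hδ3 hB1 ?_
      have e1 : Real.exp (-t) ≤ 1 := Real.exp_le_one_iff.2 (by linarith [ht.1])
      have e2 : ∀ i, |f t i - z i| ≤ s0 := fun i =>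
        (hdecay T f hf0 hf t ht i).trans (mul_le_of_le_one_right hs0n e1)
      have e3 : ∀ i, |z i| ≤ ‖z‖ := fun i => norm_le_pi_norm z i
      have a1 := (abs_le.1 (e2 i)).2
      have a2 := (abs_le.1 (e2 k)).1
      have a3 := (abs_le.1 (e3 i)).2
      have a4 := (abs_le.1 (e3 k)).1
      linarith
    have h3 : GG δ (f t) - HH δ (f t i - f t k) ≤ n * (n * B) := by
      have k1 : GG δ (f t) - HH δ (f t i - f t k) + B
          = ∑ i' : Fin n, ∑ k' : Fin n, ((if k' < i' then HH δ (f t i' - f t k') else 0)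
            + (if i' = i then if k' = k then B - HH δ (f t i - f t k) else 0 else 0)) := by
        simp only [Finset.sum_add_distrib, GG]
        simp
        ring
      have k2 : ∑ i' : Fin n, ∑ k' : Fin n, B = n * (n * B) := by simp
      have k3 : GG δ (f t) - HH δ (f t i - f t k) + B ≤ n * (n * B) := by
        rw [k1, ← k2]
        refine Finset.sum_le_sum fun i' _ => Finset.sum_le_sum fun k' _ => ?_
        by_cases hi : i' = i
        · subst hi
          by_cases hk : k' = k
          · subst hk
            simp [hik]
          · simp only [hk, if_true, if_false, add_zero]
            split_ifs
            · exact hub _ _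
            · linarith
        · simp only [hi, if_false, add_zero]
          split_ifs
          · exact hub _ _
          · linarith
      linarith
    rw [h2, hf0] at h1
    refine lt_of_HH hδ ?_
    linarith
  -- solutions for all horizons
  have hex : ∀ T : ℝ, ∃ f : ℝ → Fin n → ℝ, f 0 = x0 ∧ IsSol δ (|T|) f := fun T =>
    exists_sol hδ (abs_nonneg T) x0
  choose g hg0 hg using hex
  have huniq : ∀ T T' t : ℝ, t ∈ Set.Icc 0 |T| → t ∈ Set.Icc 0 |T'| → g T t = g T' t := by
    intro T T' t h1 h2
    have := ((hg T).mono (T' := t) h1.2).contract hδ ((hg T').mono (T' := t) h2.2) ⟨h1.1, le_rfl⟩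
    rw [hg0, hg0] at this
    simp only [sub_self, ne_eq, OfNat.ofNat_ne_zero, not_false_eq_true, zero_pow,
      Finset.sum_const_zero, mul_zero] at this
    have h3 := (Finset.sum_eq_zero_iff_of_nonneg (fun i _ => sq_nonneg _)).1
      (le_antisymm this (by positivity))
    ext i
    have := h3 i (Finset.mem_univ i)
    exact sub_eq_zero.1 (pow_eq_zero_iff two_ne_zero |>.1 this)
  let F : ℝ → Fin n → ℝ := fun t => g (t + 1) t
  have hFg : ∀ T t, 0 ≤ t → t ≤ T → F t = g T t := by
    intro T t h0 h1
    refine huniq _ _ _ ⟨h0, ?_⟩ ⟨h0, h1.trans (le_abs_self _)⟩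
    exact (by linarith : t ≤ t + 1).trans (le_abs_self _)
  have hF0 : F 0 = x0 := hg0 _
  have hFsol : ∀ T, 0 ≤ T → IsSol δ T F := by
    intro T hT t ht i
    have h1 := ((hg T).mono (le_abs_self T)) t ht i
    rw [← hFg T t ht.1 ht.2] at h1
    refine h1.congr (fun s hs => ?_) ?_
    · rw [hFg T s hs.1 hs.2]
    · rw [hFg T t ht.1 ht.2]
  have hFgap : ∀ t, 0 ≤ t → ∀ i k, k < i → δ < F t i - F t k := fun t ht =>
    hgap t F hF0 (hFsol t ht) t ⟨ht, le_rfl⟩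
  have hFd : ∀ t, 0 ≤ t → ∀ i, HasDerivWithinAt (fun s => F s i)
      ((∑ k ∈ univ.erase i, 2 / (F t i - F t k)) - F t i) (Set.Ici 0) t := by
    intro t ht i
    have h1 := hFsol (t + 1) (by linarith) t ⟨ht, by linarith⟩ i
    rw [SS_eq hδ (F t) (fun i k h => (hFgap t ht i k h).le)] at h1
    refine h1.mono_of_mem_nhdsWithin ?_
    rw [← Set.Ici_inter_Iic]
    exact Filter.inter_mem self_mem_nhdsWithin
      (mem_nhdsWithin_of_mem_nhds (Iic_mem_nhds (by linarith)))
  refine ⟨fun i t => F t i, fun i => by simp only [hF0], ?_, ?_, ?_, s0 + 1, by linarith, ?_⟩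
  · intro i t ht
    exact (hFd t ht i).differentiableWithinAt
  · intro t ht k i hki
    have := hFgap t ht i k hki
    show F t k < F t i
    linarith
  · intro i t ht
    exact (hFd t ht.le i).hasDerivAt (Ici_mem_nhds ht)
  · intro t ht i
    refine (hdecay t F hF0 (hFsol t ht) t ⟨ht, le_rfl⟩ i).trans ?_
    gcongr
    linarith
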